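/- Any two definitions of area on 2-dimensional normed planes differ by a factor of at most 2: if J and J' are two Jacobians (monotone, degree-2 homogeneous, SL₂-invariant, normalized so that J(s₀) = J'(s₀) = 1 where s₀ is the Euclidean norm), then J(s) ≤ 2·J'(s) for every norm s on ℝ². -/

import Mathlib

open Matrix MeasureTheory Real

noncomputable section

/-- The Euclidean plane. -/
abbrev E2 := EuclideanSpace ℝ (Fin 2)

/-- `SL(2,ℝ)` as matrices of determinant one. -/
abbrev SL2 := Matrix.SpecialLinearGroup (Fin 2) ℝ

/-- The seminorm `v ↦ s (M v)`, i.e. `s ∘ M`. -/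
def compM (s : Seminorm ℝ E2) (M : Matrix (Fin 2) (Fin 2) ℝ) : Seminorm ℝ E2 :=
  s.comp (Matrix.toEuclideanLin M)

/-- A seminorm is a norm iff it is positive away from the origin. -/
def IsNorm (s : Seminorm ℝ E2) : Prop := ∀ v : E2, v ≠ 0 → 0 < s v

/-- Monotonicity of a functional on seminorms. -/
def Monot (J : Seminorm ℝ E2 → ℝ) : Prop := ∀ s s' : Seminorm ℝ E2, s' ≤ s → J s' ≤ J s

/-- Degree 2 homogeneity of a functional on seminorms. -/
def Homog (J : Seminorm ℝ E2 → ℝ) : Prop :=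
  ∀ (c : NNReal) (s : Seminorm ℝ E2), J (c • s) = (c : ℝ) ^ 2 * J s

/-- `SL₂`-invariance of a functional on seminorms. -/
def SL2inv (J : Seminorm ℝ E2 → ℝ) : Prop :=
  ∀ (s : Seminorm ℝ E2) (T : SL2), J (compM s (T : Matrix (Fin 2) (Fin 2) ℝ)) = J s

/-- The Reshetnyak energy `I²₊(s) = max_{v ∈ S¹} s(v)²`. -/
def Iplus (s : Seminorm ℝ E2) : ℝ := ⨆ v : Metric.sphere (0 : E2) 1, (s (v : E2)) ^ 2

/-- The unit ball of a seminorm. -/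
def unitBallS (s : Seminorm ℝ E2) : Set E2 := {v | s v ≤ 1}

/-- The ellipse `M(D̄)` is inscribed in the unit ball of `s`. -/
def ellipseIn (s : Seminorm ℝ E2) (M : Matrix (Fin 2) (Fin 2) ℝ) : Prop :=
  (Matrix.toEuclideanLin M) '' (Metric.closedBall 0 1) ⊆ unitBallS s

/-- The area of the largest ellipse inscribed in the unit ball of `s`
(the area of the Loewner ellipse); the ellipse `M(D̄)` has area `π |det M|`. -/
def LoewnerArea (s : Seminorm ℝ E2) : ℝ :=
  sSup {a : ℝ | ∃ M : Matrix (Fin 2) (Fin 2) ℝ, ellipseIn s M ∧ a = π * |M.det|}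

/-- The inscribed Riemannian (Ivanov) Jacobian `J^i(s) = π / |L|`. -/
def Ji (s : Seminorm ℝ E2) : ℝ := π / LoewnerArea s

/-- `s` is isotropic: some round disc `t·D̄` is inscribed in the unit ball of `s` and has at
least the area of every inscribed ellipse, i.e. the Loewner ellipse is a round disc. -/
def Isotropic (s : Seminorm ℝ E2) : Prop :=
  ∃ t : ℝ, 0 < t ∧ Metric.closedBall (0 : E2) t ⊆ unitBallS s ∧
    ∀ M : Matrix (Fin 2) (Fin 2) ℝ, ellipseIn s M → π * |M.det| ≤ π * t ^ 2

/-- A Jacobian (definition of area): monotone, degree-2 homogeneous, `SL₂`-invariant,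
normalized on the Euclidean norm. -/
def IsJacobian (J : Seminorm ℝ E2 → ℝ) : Prop :=
  (∀ s, 0 ≤ J s) ∧ Monot J ∧ Homog J ∧ SL2inv J ∧ J (normSeminorm ℝ E2) = 1

lemma exists_shrink_nonneg {k b x y : ℝ} (hk : 0 < k) (hb : 0 < b) (hkb : k ^ 2 + b ^ 2 = 1)
    (hlt : k < b) (hx : 0 ≤ x) (hy : 0 ≤ y) :
    ∃ c : ℝ, |c| * k + √((x / (√2 * k) - c) ^ 2 + (y / (√2 * b)) ^ 2) ≤ √(x ^ 2 + y ^ 2) := by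
  have h2 : (√2 : ℝ) ^ 2 = 2 := Real.sq_sqrt (by norm_num)
  by_cases h : k ^ 2 * y ≤ b ^ 2 * x
  · refine ⟨(b ^ 2 * x - k ^ 2 * y) / (√2 * k * b ^ 2), ?_⟩
    have hrem : (x / (√2 * k) - (b ^ 2 * x - k ^ 2 * y) / (√2 * k * b ^ 2)) ^ 2
        + (y / (√2 * b)) ^ 2 = (y / (√2 * b ^ 2)) ^ 2 := by
      field_simp
      linear_combination (y ^ 2 * k ^ 2) * hkb
    rw [hrem, Real.sqrt_sq (by positivity), abs_of_nonneg (by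
      apply div_nonneg <;> [linarith; positivity])]
    have hsum : (b ^ 2 * x - k ^ 2 * y) / (√2 * k * b ^ 2) * k + y / (√2 * b ^ 2)
        = (x + y) / √2 := by
      field_simp
      linear_combination (-y) * hkb
    rw [hsum]
    apply Real.le_sqrt_of_sq_le
    rw [div_pow, h2]
    nlinarith [sq_nonneg (x - y)]
  · refine ⟨0, ?_⟩
    push Not at h
    simp only [abs_zero, zero_mul, zero_add, sub_zero]
    apply Real.sqrt_le_sqrt
    have hbx : b * x ≤ k * y := by
      have h1 : b * (b * x) ≤ b * (k * y) := by
        nlinarith [mul_nonneg (mul_nonneg hk.le hy) (sub_nonneg.2 hlt.le)]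
      exact le_of_mul_le_mul_left h1 hb
    have hsq : (b * x) ^ 2 ≤ (k * y) ^ 2 := pow_le_pow_left₀ (by positivity) hbx 2
    have hd : x ^ 2 + y ^ 2 - ((x / (√2 * k)) ^ 2 + (y / (√2 * b)) ^ 2)
        = (b ^ 2 - k ^ 2) * ((k * y) ^ 2 - (b * x) ^ 2) / (2 * k ^ 2 * b ^ 2) := by
      simp only [div_pow, mul_pow, h2]
      field_simp
      linear_combination (b ^ 2 * x ^ 2 + k ^ 2 * y ^ 2) * hkb
    have : 0 ≤ (b ^ 2 - k ^ 2) * ((k * y) ^ 2 - (b * x) ^ 2) / (2 * k ^ 2 * b ^ 2) := by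
      apply div_nonneg (mul_nonneg _ (by linarith)) (by positivity)
      nlinarith
    linarith

/-- The ellipse with semi-axes `1 / (√2 k)` and `1 / (√2 b)` lies in the convex hull of the unit
disc and the points at distance `1 / k` from the origin on the first axis. -/
lemma exists_shrink {k b : ℝ} (hk : 0 < k) (hb : 0 < b) (hkb : k ^ 2 + b ^ 2 = 1)
    (hlt : k < b) (x y : ℝ) :
    ∃ c : ℝ, |c| * k + √((x / (√2 * k) - c) ^ 2 + (y / (√2 * b)) ^ 2) ≤ √(x ^ 2 + y ^ 2) := by
  obtain ⟨c, hc⟩ := exists_shrink_nonneg hk hb hkb hlt (abs_nonneg x) (abs_nonneg y)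
  rw [div_pow |y|, sq_abs, sq_abs, ← div_pow] at hc
  rcases abs_cases x with ⟨hx, -⟩ | ⟨hx, -⟩
  · exact ⟨c, by rwa [hx] at hc⟩
  · refine ⟨-c, ?_⟩
    rw [hx] at hc
    rwa [abs_neg, show (x / (√2 * k) - -c) ^ 2 = (-x / (√2 * k) - c) ^ 2 by ring]

lemma norm_E2_eq (v : E2) : ‖v‖ = √(v 0 ^ 2 + v 1 ^ 2) := by
  simp [EuclideanSpace.norm_eq]

lemma compM_apply (s : Seminorm ℝ E2) (M : Matrix (Fin 2) (Fin 2) ℝ) (v : E2) :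
    compM s M v = s (Matrix.toEuclideanLin M v) := rfl

lemma compM_mul (s : Seminorm ℝ E2) (M N : Matrix (Fin 2) (Fin 2) ℝ) :
    compM s (M * N) = compM (compM s M) N := by
  ext v
  simp [compM_apply, Matrix.toLpLin_apply]

/-- A seminorm below the Euclidean norm which is small at some unit vector stays below the
Euclidean norm after precomposing with some matrix of determinant greater than one. -/
lemma exists_one_lt_det {s : Seminorm ℝ E2} (hs : s ≤ normSeminorm ℝ E2) {u : E2}
    (hu : ‖u‖ = 1) {k : ℝ} (hk : 0 < k) (hk2 : 2 * k ^ 2 < 1) (hsu : s u ≤ k) :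
    ∃ M : Matrix (Fin 2) (Fin 2) ℝ, 1 < M.det ∧ compM s M ≤ normSeminorm ℝ E2 := by
  obtain ⟨b, hb, hkb⟩ : ∃ b : ℝ, 0 < b ∧ k ^ 2 + b ^ 2 = 1 :=
    ⟨√(1 - k ^ 2), Real.sqrt_pos.2 (by nlinarith), by rw [Real.sq_sqrt (by nlinarith)]; ring⟩
  have hlt : k < b := lt_of_pow_lt_pow_left₀ 2 hb.le (by linarith)
  have hu2 : u 0 ^ 2 + u 1 ^ 2 = 1 := by
    rw [norm_E2_eq, Real.sqrt_eq_one] at hu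
    exact hu
  have h2 : (√2 : ℝ) ^ 2 = 2 := Real.sq_sqrt (by norm_num)
  set p := 1 / (√2 * k) with hp
  set q := 1 / (√2 * b) with hq
  refine ⟨!![q + (p - q) * u 0 ^ 2, (p - q) * (u 0 * u 1);
    (p - q) * (u 0 * u 1), q + (p - q) * u 1 ^ 2], ?_, fun w => ?_⟩
  · have hdet : (!![q + (p - q) * u 0 ^ 2, (p - q) * (u 0 * u 1);
        (p - q) * (u 0 * u 1), q + (p - q) * u 1 ^ 2] : Matrix (Fin 2) (Fin 2) ℝ).det
        = p * q := by
      rw [Matrix.det_fin_two_of]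
      linear_combination q * (p - q) * hu2
    have hpq : p * q = 1 / (2 * k * b) := by
      rw [hp, hq, div_mul_div_comm, one_mul]
      congr 1
      linear_combination k * b * h2
    rw [hdet, hpq, one_lt_div (by positivity)]
    nlinarith [sq_pos_of_pos (sub_pos.2 hlt)]
  · obtain ⟨c, hc⟩ := exists_shrink hk hb hkb hlt (u 0 * w 0 + u 1 * w 1)
      (u 0 * w 1 - u 1 * w 0)
    rw [compM_apply, coe_normSeminorm]
    set z := Matrix.toEuclideanLin !![q + (p - q) * u 0 ^ 2, (p - q) * (u 0 * u 1);
      (p - q) * (u 0 * u 1), q + (p - q) * u 1 ^ 2] w with hz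
    have hz0 : z 0 = (q + (p - q) * u 0 ^ 2) * w 0 + (p - q) * (u 0 * u 1) * w 1 := by
      simp [hz, Matrix.toLpLin_apply, dotProduct]
    have hz1 : z 1 = (p - q) * (u 0 * u 1) * w 0 + (q + (p - q) * u 1 ^ 2) * w 1 := by
      simp [hz, Matrix.toLpLin_apply, dotProduct]
    have hnw : √((u 0 * w 0 + u 1 * w 1) ^ 2 + (u 0 * w 1 - u 1 * w 0) ^ 2) = ‖w‖ := by
      rw [norm_E2_eq]
      congr 1
      linear_combination (w 0 ^ 2 + w 1 ^ 2) * hu2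
    have hnz : √(((u 0 * w 0 + u 1 * w 1) / (√2 * k) - c) ^ 2
        + ((u 0 * w 1 - u 1 * w 0) / (√2 * b)) ^ 2) = ‖z - c • u‖ := by
      rw [norm_E2_eq]
      congr 1
      rw [div_eq_mul_one_div _ (√2 * k), div_eq_mul_one_div _ (√2 * b), ← hp, ← hq]
      simp only [PiLp.sub_apply, PiLp.smul_apply, smul_eq_mul, hz0, hz1]
      linear_combination (q ^ 2 * (w 0 ^ 2 + w 1 ^ 2) - (p - q) ^ 2 * (u 0 * w 0 + u 1 * w 1) ^ 2
        + 2 * c * (p - q) * (u 0 * w 0 + u 1 * w 1) - c ^ 2) * hu2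
    rw [hnw, hnz] at hc
    calc s z = s (c • u + (z - c • u)) := by rw [add_sub_cancel]
      _ ≤ s (c • u) + s (z - c • u) := map_add_le_add s _ _
      _ ≤ |c| * k + ‖z - c • u‖ := by
        rw [map_smul_eq_mul, Real.norm_eq_abs]
        exact add_le_add (mul_le_mul_of_nonneg_left hsu (abs_nonneg c)) (hs _)
      _ ≤ ‖w‖ := hc

lemma continuous_seminorm_E2 (s : Seminorm ℝ E2) : Continuous s :=
  s.convexOn.locallyLipschitz.continuous

lemma IsNorm.exists_le {s : Seminorm ℝ E2} (hs : IsNorm s) :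
    ∃ C : ℝ, 0 < C ∧ ∀ v, ‖v‖ ≤ C * s v := by
  obtain ⟨v₀, hv₀, hmin⟩ := (isCompact_sphere (0 : E2) 1).exists_isMinOn
    (NormedSpace.sphere_nonempty.2 zero_le_one) (continuous_seminorm_E2 s).continuousOn
  have hpos : 0 < s v₀ := hs v₀ (ne_zero_of_mem_unit_sphere ⟨v₀, hv₀⟩)
  refine ⟨(s v₀)⁻¹, inv_pos.2 hpos, fun v => ?_⟩
  rcases eq_or_ne v 0 with rfl | hv
  · simp
  have hn : 0 < ‖v‖ := norm_pos_iff.2 hv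
  have h := hmin (show ‖v‖⁻¹ • v ∈ Metric.sphere (0 : E2) 1 by
    simp [norm_smul, hn.ne'])
  simp only [Set.mem_ofPred_eq, map_smul_eq_mul, norm_inv, norm_norm] at h
  rw [inv_mul_eq_div, le_div_iff₀ hpos]
  rwa [inv_mul_eq_div, le_div_iff₀ hn, mul_comm] at h

lemma exists_le_norm (s : Seminorm ℝ E2) : ∃ C : ℝ, 0 < C ∧ ∀ v, s v ≤ C * ‖v‖ :=
  Seminorm.bound_of_continuous_normedSpace s (continuous_seminorm_E2 s)

lemma isCompact_compM_le {s : Seminorm ℝ E2} (hs : IsNorm s) :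
    IsCompact {M : Matrix (Fin 2) (Fin 2) ℝ | compM s M ≤ normSeminorm ℝ E2} := by
  obtain ⟨C, hC, hCs⟩ := hs.exists_le
  have hbox : IsCompact (Set.univ.pi fun _ => Set.univ.pi fun _ => Set.Icc (-C) C :
      Set (Matrix (Fin 2) (Fin 2) ℝ)) :=
    isCompact_univ_pi fun _ => isCompact_univ_pi fun _ => isCompact_Icc
  refine hbox.of_isClosed_subset ?_ fun (M : Matrix (Fin 2) (Fin 2) ℝ) hM i _ j _ => ?_
  · have : {M : Matrix (Fin 2) (Fin 2) ℝ | compM s M ≤ normSeminorm ℝ E2}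
        = ⋂ v : E2, {M | s (Matrix.toEuclideanLin M v) ≤ ‖v‖} := by
      ext M
      simp [Seminorm.le_def, compM_apply]
    rw [this]
    refine isClosed_iInter fun v => isClosed_le ?_ continuous_const
    refine (continuous_seminorm_E2 s).comp ?_
    simp only [Matrix.toLpLin_apply]
    fun_prop
  · have h1 : s (Matrix.toEuclideanLin M (EuclideanSpace.single j 1))
        ≤ ‖(EuclideanSpace.single j 1 : E2)‖ := hM (EuclideanSpace.single j 1)
    have h2 := hCs (Matrix.toEuclideanLin M (EuclideanSpace.single j 1))
    have h3 := PiLp.norm_apply_le (Matrix.toEuclideanLin M (EuclideanSpace.single j 1)) i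
    rw [PiLp.norm_single, norm_one] at h1
    have h4 : (Matrix.toEuclideanLin M (EuclideanSpace.single j 1)) i = M i j := by
      simp [Matrix.toLpLin_apply]
    rw [h4, Real.norm_eq_abs] at h3
    exact abs_le.1 (h3.trans (h2.trans (by nlinarith)))

/-- John's theorem for norms on the plane. -/
lemma IsNorm.exists_john {s : Seminorm ℝ E2} (hs : IsNorm s) :
    ∃ M : Matrix (Fin 2) (Fin 2) ℝ, 0 < M.det ∧ compM s M ≤ normSeminorm ℝ E2 ∧
      normSeminorm ℝ E2 ≤ NNReal.sqrt 2 • compM s M := by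
  obtain ⟨C, hC, hCs⟩ := exists_le_norm s
  have hsc : compM s (Matrix.scalar (Fin 2) C⁻¹) ≤ normSeminorm ℝ E2 := fun v => by
    have hv : Matrix.toEuclideanLin (Matrix.scalar (Fin 2) C⁻¹) v = C⁻¹ • v := by
      ext i
      simp [Matrix.toLpLin_apply]
    rw [compM_apply, hv, map_smul_eq_mul, coe_normSeminorm, norm_inv, Real.norm_of_nonneg hC.le,
      inv_mul_le_iff₀ hC]
    exact hCs v
  obtain ⟨M, hM, hmax⟩ := (isCompact_compM_le hs).exists_isMaxOn ⟨_, hsc⟩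
    (continuous_id.matrix_det).continuousOn
  have hdet : 0 < M.det := by
    refine lt_of_lt_of_le ?_ (hmax hsc)
    simp only [id, Matrix.scalar_apply, Matrix.det_diagonal, Finset.prod_const]
    positivity
  refine ⟨M, hdet, hM, fun v => ?_⟩
  by_contra! hlt
  rw [_root_.smul_apply, NNReal.smul_def, coe_normSeminorm, Real.coe_sqrt, smul_eq_mul,
    NNReal.coe_ofNat] at hlt
  have hn : 0 < ‖v‖ := lt_of_le_of_lt (by positivity) hlt
  have hu : ‖‖v‖⁻¹ • v‖ = 1 := by simp [norm_smul, hn.ne']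
  have hsu : √2 * compM s M (‖v‖⁻¹ • v) < 1 := by
    rw [map_smul_eq_mul, norm_inv, norm_norm, mul_left_comm, inv_mul_lt_iff₀ hn, mul_one]
    exact hlt
  have hk2 : 2 * max (compM s M (‖v‖⁻¹ • v)) (1 / 2) ^ 2 < 1 := by
    rcases max_cases (compM s M (‖v‖⁻¹ • v)) (1 / 2) with ⟨h, -⟩ | ⟨h, -⟩
    · rw [h]
      have := pow_lt_one₀ (by positivity) hsu two_ne_zero
      rwa [mul_pow, Real.sq_sqrt zero_le_two] at this
    · rw [h]
      norm_num
  obtain ⟨N, hN, hMN⟩ := exists_one_lt_det hM hu (lt_max_of_lt_right one_half_pos) hk2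
    (le_max_left _ _)
  rw [← compM_mul] at hMN
  have h : (M * N).det ≤ M.det := hmax hMN
  rw [Matrix.det_mul] at h
  nlinarith

lemma IsJacobian.compM_eq {J : Seminorm ℝ E2 → ℝ} (hJ : IsJacobian J) (s : Seminorm ℝ E2)
    {M : Matrix (Fin 2) (Fin 2) ℝ} (hM : 0 < M.det) : J (compM s M) = M.det * J s := by
  obtain ⟨-, -, hhom, hinv, -⟩ := hJ
  have hr : 0 < √M.det := Real.sqrt_pos.2 hM
  have hT : ((√M.det)⁻¹ • M).det = 1 := by
    rw [Matrix.det_smul, Fintype.card_fin, inv_pow, Real.sq_sqrt hM.le, inv_mul_cancel₀ hM.ne']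
  have hcomp : compM s M = NNReal.mk (√M.det) hr.le • compM s ((√M.det)⁻¹ • M) := by
    ext v
    rw [_root_.smul_apply, compM_apply, compM_apply, map_smul, LinearMap.smul_apply,
      map_smul_eq_mul, NNReal.smul_def, NNReal.coe_mk, smul_eq_mul, norm_inv,
      Real.norm_of_nonneg hr.le, mul_inv_cancel_left₀ hr.ne']
  rw [hcomp, hhom, NNReal.coe_mk, Real.sq_sqrt hM.le]
  congr 1
  exact hinv s ⟨_, hT⟩

/-- Any two normalized Jacobians differ by a factor of at most `2` on every norm. -/
theorem stmt5 (J J' : Seminorm ℝ E2 → ℝ) (hJ : IsJacobian J) (hJ' : IsJacobian J')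
    (s : Seminorm ℝ E2) (hs : IsNorm s) :
    J s ≤ 2 * J' s := by
  obtain ⟨M, hdet, hle, hge⟩ := hs.exists_john
  have h1 := hJ.2.1 _ _ hle
  have h2 := hJ'.2.1 _ _ hge
  rw [hJ.compM_eq s hdet, hJ.2.2.2.2] at h1
  rw [hJ'.2.2.1, hJ'.compM_eq s hdet, hJ'.2.2.2.2, Real.coe_sqrt, NNReal.coe_ofNat,
    Real.sq_sqrt zero_le_two] at h2
  refine le_of_mul_le_mul_left ?_ hdet
  linarith
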